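/- If i ≠ j, then N_i = (p^(p^(i+1)) - 1)/(p^(p^i) - 1) and N_j = (p^(p^(j+1)) - 1)/(p^(p^j) - 1) are relatively prime. -/

import Mathlib

/-!
Write `N x n = 1 + x + ⋯ + x ^ (n - 1)`. Since `N x n` divides `x ^ n - 1`, every power `y` of
`x ^ n` is `1` modulo `N x n`, so that `N y m ≡ m` there. With `x = p ^ p ^ i` and `i < j`, the
element `p ^ p ^ j` is such a power, so `N_j ≡ p` modulo `N_i`, while `N_i ≡ 1` modulo `p`.
-/

section CommRing

variable {R : Type*} [CommRing R]

theorem isCoprime_geom_sum_self (x : R) {n : ℕ} (hn : n ≠ 0) :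
    IsCoprime (∑ k ∈ Finset.range n, x ^ k) x := by
  obtain ⟨m, rfl⟩ := Nat.exists_eq_succ_of_ne_zero hn
  rw [geom_sum_succ]
  exact isCoprime_one_left.mul_add_left_left _

theorem geom_sum_dvd_pow_pow_sub_one (x : R) (n d : ℕ) :
    ∑ k ∈ Finset.range n, x ^ k ∣ (x ^ n) ^ d - 1 :=
  (Dvd.intro _ (geom_sum_mul x n)).trans (sub_one_dvd_pow_sub_one (x ^ n) d)

theorem sub_one_dvd_geom_sum_sub_natCast (x : R) (n : ℕ) :
    x - 1 ∣ ∑ k ∈ Finset.range n, x ^ k - n := by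
  have h : ∑ k ∈ Finset.range n, x ^ k - n = ∑ k ∈ Finset.range n, (x ^ k - 1) := by simp
  exact h ▸ Finset.dvd_sum fun k _ => sub_one_dvd_pow_sub_one x k

theorem isCoprime_geom_sum_geom_sum_pow_pow_iff (x : R) (n d m : ℕ) :
    IsCoprime (∑ k ∈ Finset.range n, x ^ k) (∑ k ∈ Finset.range m, ((x ^ n) ^ d) ^ k) ↔
      IsCoprime (∑ k ∈ Finset.range n, x ^ k) (m : R) := by
  obtain ⟨c, hc⟩ := (geom_sum_dvd_pow_pow_sub_one x n d).trans
    (sub_one_dvd_geom_sum_sub_natCast ((x ^ n) ^ d) m)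
  rw [sub_eq_iff_eq_add.mp hc]
  exact IsCoprime.mul_add_left_right_iff

theorem N_pairwise_coprime_general {a : R} {n m : ℕ} (hn : n ≠ 0) (hna : (n : R) ∣ a ^ m)
    {i j : ℕ} (hij : i ≠ j) :
    IsCoprime (∑ k ∈ Finset.range n, (a ^ n ^ i) ^ k)
      (∑ k ∈ Finset.range n, (a ^ n ^ j) ^ k) := by
  wlog hlt : i < j generalizing i j
  · exact (this hij.symm (hij.lt_or_gt.resolve_left hlt)).symm
  obtain ⟨d, rfl⟩ := Nat.exists_eq_add_of_lt hlt
  have hpow : a ^ n ^ (i + d + 1) = ((a ^ n ^ i) ^ n) ^ n ^ d := by ring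
  have hcop : IsCoprime (∑ k ∈ Finset.range n, (a ^ n ^ i) ^ k) a :=
    (isCoprime_geom_sum_self (a ^ n ^ i) hn).of_isCoprime_of_dvd_right
      (dvd_pow_self a (pow_ne_zero i hn))
  rw [hpow, isCoprime_geom_sum_geom_sum_pow_pow_iff]
  exact hcop.pow_right.of_isCoprime_of_dvd_right hna

end CommRing

theorem N_pairwise_coprime (p : ℕ) (hp : p.Prime) (i j : ℕ) (hij : i ≠ j) :
    Nat.Coprime (∑ k ∈ Finset.range p, (p ^ p ^ i) ^ k)
      (∑ k ∈ Finset.range p, (p ^ p ^ j) ^ k) := by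
  have h := N_pairwise_coprime_general hp.ne_zero (dvd_pow_self (p : ℤ) one_ne_zero) hij
  exact Nat.isCoprime_iff_coprime.mp (mod_cast h)
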